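/- Let θ > 0, A ∈ ℝ^{d×d}, B ∈ ℝ^{d×m}, C ∈ ℝ^{k×d}, σ ∈ ℝ^{d×n}, and let R ∈ ℝ^{m×m} be symmetric positive definite. Let S : [0,T] → ℝ^{d×d} be a continuously differentiable symmetric-positive-definite-matrix-valued function satisfying (d/dt)S_t = A S_t + S_t Aᵀ + θ S_t CᵀC S_t − (1/θ)(B R⁻¹ Bᵀ − θ σσᵀ). Let ρ(t,z) := (2π)^{−d/2} (det S_t)^{−1/2} exp(−½ zᵀ S_t⁻¹ z) be the density of N(0, S_t). Then for all t ∈ [0,T] and z ∈ ℝ^d, ∂ρ/∂t (t,z) = −∇_z·( ρ(t,·) ( A(·) + (θ/2) S_t CᵀC (·) + σσᵀ S_t⁻¹ (·) ) )(z) − ½ tr( ((1/θ) B R⁻¹ Bᵀ + σσᵀ) ∇_z²ρ(t,z) ), where A(·), (θ/2)S_tCᵀC(·), σσᵀS_t⁻¹(·) denote the linear vector fields z ↦ Az, z ↦ (θ/2)S_tCᵀCz, z ↦ σσᵀS_t⁻¹z. -/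

import Mathlib

open Matrix

/-- Partial derivative in direction `i`. -/
noncomputable def pd {d : ℕ} (i : Fin d) (f : (Fin d → ℝ) → ℝ) (x : Fin d → ℝ) : ℝ :=
  fderiv ℝ f x (Pi.single i 1)

/-- Spatial gradient. -/
noncomputable def grad {d : ℕ} (f : (Fin d → ℝ) → ℝ) (x : Fin d → ℝ) : Fin d → ℝ :=
  fun i => pd i f x

/-- Spatial Hessian as a matrix. -/
noncomputable def hess {d : ℕ} (f : (Fin d → ℝ) → ℝ) (x : Fin d → ℝ) :
    Matrix (Fin d) (Fin d) ℝ :=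
  Matrix.of fun i j => pd i (fun y => pd j f y) x

/-- Divergence of a vector field. -/
noncomputable def dvg {d : ℕ} (v : (Fin d → ℝ) → (Fin d → ℝ)) (x : Fin d → ℝ) : ℝ :=
  ∑ i, pd i (fun y => v y i) x

section Calculus

variable {ι : Type*} [Fintype ι] [DecidableEq ι]

/-- Jacobi's formula for the derivative of a determinant. -/
theorem hasDerivAt_det {M : ℝ → Matrix ι ι ℝ} {M' : Matrix ι ι ℝ} {t : ℝ}
    (h : ∀ i j, HasDerivAt (fun s => M s i j) (M' i j) t) :
    HasDerivAt (fun s => (M s).det) ((M t).adjugate * M').trace t := by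
  have key : HasDerivAt (fun s => (M s).det)
      (∑ p : Equiv.Perm ι, ((Equiv.Perm.sign p : ℤ) : ℝ) *
        ∑ i, (∏ j ∈ Finset.univ.erase i, M t (p j) j) • M' (p i) i) t := by
    simp only [Matrix.det_apply']
    exact HasDerivAt.fun_sum fun p _ =>
      (HasDerivAt.fun_finsetProd fun i _ => h (p i) i).const_mul _
  convert key using 1
  have hdiag : ∀ i, ((M t).adjugate * M') i i = ((M t).updateCol i (M'.col i)).det := by
    intro i
    rw [← Matrix.cramer_apply, Matrix.cramer_eq_adjugate_mulVec]
    rfl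
  simp only [Matrix.trace, Matrix.diag_apply, hdiag, Matrix.det_apply', Finset.mul_sum]
  rw [Finset.sum_comm]
  refine Finset.sum_congr rfl fun p _ => Finset.sum_congr rfl fun i _ => ?_
  rw [← Finset.prod_erase_mul _ _ (Finset.mem_univ i), smul_eq_mul]
  congr 2
  · refine Finset.prod_congr rfl fun j hj => ?_
    simp [Matrix.updateCol_ne (Finset.ne_of_mem_erase hj)]
  · simp

/-- The derivative of the inverse of a matrix-valued curve. -/
theorem hasDerivAt_matrix_inv {M : ℝ → Matrix ι ι ℝ} {M' : Matrix ι ι ℝ} {t : ℝ}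
    (h : ∀ i j, HasDerivAt (fun s => M s i j) (M' i j) t) (hM : IsUnit (M t)) (i j : ι) :
    HasDerivAt (fun s => (M s)⁻¹ i j) (-((M t)⁻¹ * M' * (M t)⁻¹) i j) t := by
  let _ : NormedRing (Matrix ι ι ℝ) := Matrix.linftyOpNormedRing
  let _ : NormedAlgebra ℝ (Matrix ι ι ℝ) := Matrix.linftyOpNormedAlgebra
  obtain ⟨u, hu⟩ := hM
  have hder : HasDerivAt M M' t := hasDerivAt_pi.2 fun i => hasDerivAt_pi.2 (h i)
  have hinv := hasFDerivAt_ringInverse (𝕜 := ℝ) u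
  rw [hu] at hinv
  have hcomp := hinv.comp_hasDerivAt t hder
  have hu' : ((u⁻¹ : (Matrix ι ι ℝ)ˣ) : Matrix ι ι ℝ) = (M t)⁻¹ := by
    rw [← hu, Matrix.coe_units_inv]
  have hentry := hasDerivAt_pi.1 (hasDerivAt_pi.1 hcomp i) j
  simpa [Function.comp_def, ← Matrix.nonsing_inv_eq_ringInverse, hu'] using hentry

end Calculus

section Gaussian

variable {d : ℕ} {Q : Matrix (Fin d) (Fin d) ℝ} {c : ℝ} {f : (Fin d → ℝ) → ℝ}

theorem hasFDerivAt_mulVec_apply (M : Matrix (Fin d) (Fin d) ℝ) (j : Fin d) (y : Fin d → ℝ) :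
    HasFDerivAt (fun x => (M *ᵥ x) j)
      (∑ l, M j l • ContinuousLinearMap.proj (R := ℝ) (φ := fun _ : Fin d => ℝ) l) y := by
  simp only [Matrix.mulVec, dotProduct]
  exact HasFDerivAt.fun_sum fun l _ => (hasFDerivAt_apply l y).const_mul (M j l)

/-- A centred Gaussian is differentiable, with gradient `-f y • Q y`. -/
theorem exists_hasFDerivAt_gaussian (hQ : Q.IsSymm)
    (hf : ∀ y, f y = c * Real.exp (-(1 / 2) * (y ⬝ᵥ Q *ᵥ y))) (y : Fin d → ℝ) :
    ∃ f' : (Fin d → ℝ) →L[ℝ] ℝ, HasFDerivAt f f' y ∧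
      ∀ i, f' (Pi.single i 1) = -(f y * (Q *ᵥ y) i) := by
  have hquad := HasFDerivAt.fun_sum (u := Finset.univ) fun j _ =>
    (hasFDerivAt_apply (𝕜 := ℝ) j y).mul (hasFDerivAt_mulVec_apply Q j y)
  have hexp := ((hquad.const_mul (-(1 / 2))).exp).const_mul c
  refine ⟨_, hexp.congr_of_eventuallyEq (.of_forall hf), fun i => ?_⟩
  have hsymm : ∑ j, y j * Q j i = (Q *ᵥ y) i := by
    simp only [Matrix.mulVec, dotProduct]
    exact Finset.sum_congr rfl fun j _ => by rw [hQ.apply, mul_comm]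
  rw [hf]
  simp [Pi.single_apply, Finset.sum_add_distrib, hsymm, dotProduct]
  ring

theorem pd_gaussian (hQ : Q.IsSymm)
    (hf : ∀ y, f y = c * Real.exp (-(1 / 2) * (y ⬝ᵥ Q *ᵥ y))) (i : Fin d) (y : Fin d → ℝ) :
    pd i f y = -(f y * (Q *ᵥ y) i) := by
  obtain ⟨f', hf', hval⟩ := exists_hasFDerivAt_gaussian hQ hf y
  rw [pd, hf'.fderiv, hval]

/-- Partial derivatives of a linear vector field weighted by a centred Gaussian. -/
theorem pd_gaussian_mul_mulVec (hQ : Q.IsSymm)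
    (hf : ∀ y, f y = c * Real.exp (-(1 / 2) * (y ⬝ᵥ Q *ᵥ y)))
    (M : Matrix (Fin d) (Fin d) ℝ) (i j : Fin d) (y : Fin d → ℝ) :
    pd i (fun x => f x * (M *ᵥ x) j) y = f y * (M j i - (Q *ᵥ y) i * (M *ᵥ y) j) := by
  obtain ⟨f', hf', hval⟩ := exists_hasFDerivAt_gaussian hQ hf y
  rw [pd, (hf'.fun_mul (hasFDerivAt_mulVec_apply M j y)).fderiv]
  simp [hval, Pi.single_apply]
  ring

theorem dvg_gaussian_smul_mulVec (hQ : Q.IsSymm)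
    (hf : ∀ y, f y = c * Real.exp (-(1 / 2) * (y ⬝ᵥ Q *ᵥ y)))
    (M : Matrix (Fin d) (Fin d) ℝ) (y : Fin d → ℝ) :
    dvg (fun x => f x • M *ᵥ x) y = f y * (M.trace - Q *ᵥ y ⬝ᵥ M *ᵥ y) := by
  simp only [dvg, Pi.smul_apply, smul_eq_mul, pd_gaussian_mul_mulVec hQ hf, ← Finset.mul_sum,
    Finset.sum_sub_distrib]
  rfl

theorem hess_gaussian (hQ : Q.IsSymm)
    (hf : ∀ y, f y = c * Real.exp (-(1 / 2) * (y ⬝ᵥ Q *ᵥ y))) (y : Fin d → ℝ) :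
    hess f y = f y • (vecMulVec (Q *ᵥ y) (Q *ᵥ y) - Q) := by
  ext i j
  have hgrad : (fun x => pd j f x) = fun x => f x * (-Q *ᵥ x) j := by
    funext x
    simp [pd_gaussian hQ hf, Matrix.neg_mulVec]
  rw [hess, Matrix.of_apply, hgrad, pd_gaussian_mul_mulVec hQ hf]
  simp only [Matrix.neg_mulVec, Matrix.neg_apply, Pi.neg_apply, Matrix.smul_apply,
    Matrix.sub_apply, vecMulVec_apply, hQ.apply i j, smul_eq_mul]
  ring

theorem trace_mul_hess_gaussian (hQ : Q.IsSymm)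
    (hf : ∀ y, f y = c * Real.exp (-(1 / 2) * (y ⬝ᵥ Q *ᵥ y)))
    (D : Matrix (Fin d) (Fin d) ℝ) (y : Fin d → ℝ) :
    (D * hess f y).trace = f y * (Q *ᵥ y ⬝ᵥ D *ᵥ (Q *ᵥ y) - (D * Q).trace) := by
  rw [hess_gaussian hQ hf, Matrix.mul_smul, Matrix.trace_smul, Matrix.mul_sub, Matrix.trace_sub,
    Matrix.mul_vecMulVec, Matrix.trace_vecMulVec, smul_eq_mul, dotProduct_comm]

/-- Derivative of a centred Gaussian density along a curve of covariance matrices. -/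
theorem hasDerivAt_gaussian_covariance {S : ℝ → Matrix (Fin d) (Fin d) ℝ}
    {S' : Matrix (Fin d) (Fin d) ℝ} {t : ℝ} (hpd : (S t).PosDef)
    (hS : ∀ i j, HasDerivAt (fun s => S s i j) (S' i j) t) (c : ℝ) (z : Fin d → ℝ) :
    HasDerivAt (fun s => c * (S s).det ^ (-(1 : ℝ) / 2) *
        Real.exp (-(1 / 2) * (z ⬝ᵥ (S s)⁻¹ *ᵥ z)))
      (c * (S t).det ^ (-(1 : ℝ) / 2) * Real.exp (-(1 / 2) * (z ⬝ᵥ (S t)⁻¹ *ᵥ z)) *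
        (1 / 2 * ((S t)⁻¹ *ᵥ z ⬝ᵥ S' *ᵥ ((S t)⁻¹ *ᵥ z)) - 1 / 2 * ((S t)⁻¹ * S').trace)) t := by
  have hdet := hpd.det_pos
  have hsymm : (S t)⁻¹.IsSymm := by
    simpa [Matrix.IsHermitian, Matrix.IsSymm] using hpd.isHermitian.inv
  have hquad : HasDerivAt (fun s => z ⬝ᵥ (S s)⁻¹ *ᵥ z)
      (-((S t)⁻¹ *ᵥ z ⬝ᵥ S' *ᵥ ((S t)⁻¹ *ᵥ z))) t := by
    have hsum : HasDerivAt (fun s => z ⬝ᵥ (S s)⁻¹ *ᵥ z)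
        (z ⬝ᵥ (-((S t)⁻¹ * S' * (S t)⁻¹)) *ᵥ z) t := by
      simp only [Matrix.mulVec, dotProduct, Matrix.neg_apply]
      exact HasDerivAt.fun_sum fun i _ => HasDerivAt.const_mul _ <|
        HasDerivAt.fun_sum fun j _ => (hasDerivAt_matrix_inv hS hpd.isUnit i j).mul_const _
    convert hsum using 1
    rw [Matrix.neg_mulVec, dotProduct_neg, ← Matrix.mulVec_mulVec, ← Matrix.mulVec_mulVec,
      dotProduct_mulVec z, ← Matrix.mulVec_transpose, hsymm.eq]
  have hpow := (hasDerivAt_det hS).rpow_const (p := -(1 : ℝ) / 2) (Or.inl hdet.ne')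
  have hadj : ((S t).adjugate * S').trace = (S t).det * ((S t)⁻¹ * S').trace := by
    rw [Matrix.inv_def, Matrix.smul_mul, Matrix.trace_smul, Ring.inverse_eq_inv', smul_eq_mul,
      mul_inv_cancel_left₀ hdet.ne']
  refine ((hpow.const_mul c).fun_mul (hquad.const_mul (-(1 / 2))).exp).congr_deriv ?_
  rw [hadj, Real.rpow_sub_one hdet.ne']
  field_simp
  ring

end Gaussian

/-- Fokker-Planck equation of the dual-EnKF mean-field process in the
LEQG (risk-averse, θ > 0) case: drift `Az`, interaction `(θ/2) S_t CᵀC z`, correction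
`σσᵀ S_t⁻¹ z`, diffusion `(1/θ) BR⁻¹Bᵀ + σσᵀ`. -/
theorem leqg_pos_mean_field_fokker_planck
    (d m k n : ℕ) (T : ℝ) (hT : 0 < T)
    (θ : ℝ) (hθ : 0 < θ)
    (A : Matrix (Fin d) (Fin d) ℝ) (B : Matrix (Fin d) (Fin m) ℝ)
    (C : Matrix (Fin k) (Fin d) ℝ) (σ : Matrix (Fin d) (Fin n) ℝ)
    (R : Matrix (Fin m) (Fin m) ℝ) (hR : R.PosDef)
    (S S' : ℝ → Matrix (Fin d) (Fin d) ℝ)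
    (hSpd : ∀ t ∈ Set.Icc (0 : ℝ) T, (S t).PosDef)
    (hS : ∀ t ∈ Set.Icc (0 : ℝ) T, ∀ i j, HasDerivAt (fun s => S s i j) (S' t i j) t)
    (hS'cont : ∀ i j, ContinuousOn (fun t => S' t i j) (Set.Icc (0 : ℝ) T))
    (hric : ∀ t ∈ Set.Icc (0 : ℝ) T,
      S' t = A * S t + S t * Aᵀ + θ • (S t * (Cᵀ * C) * S t)
        - θ⁻¹ • (B * R⁻¹ * Bᵀ - θ • (σ * σᵀ)))
    (ρ : ℝ → (Fin d → ℝ) → ℝ)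
    (hρ : ∀ t z, ρ t z =
      (2 * Real.pi) ^ (-(d : ℝ) / 2) * (S t).det ^ (-(1 : ℝ) / 2) *
        Real.exp (-(1 / 2) * (z ⬝ᵥ (S t)⁻¹.mulVec z))) :
    ∀ t ∈ Set.Icc (0 : ℝ) T, ∀ z,
      deriv (fun s => ρ s z) t =
        -(dvg (fun y => ρ t y •
            (A.mulVec y + (θ / 2) • ((S t * (Cᵀ * C)).mulVec y)
              + (σ * σᵀ * (S t)⁻¹).mulVec y)) z)
        - (1 / 2) * ((θ⁻¹ • (B * R⁻¹ * Bᵀ) + σ * σᵀ) * hess (ρ t) z).trace := by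
  intro t ht z
  set Q := (S t)⁻¹ with hQdef
  have hpd := hSpd t ht
  have hsymm : Q.IsSymm := by
    simpa [Matrix.IsHermitian, Matrix.IsSymm] using hpd.isHermitian.inv
  have hdet : IsUnit (S t).det := hpd.det_pos.ne'.isUnit
  have hSQ : S t * Q = 1 := Matrix.mul_nonsing_inv _ hdet
  have hQS : Q * S t = 1 := Matrix.nonsing_inv_mul _ hdet
  have hfield : (fun y => ρ t y • (A.mulVec y + (θ / 2) • ((S t * (Cᵀ * C)).mulVec y)
        + (σ * σᵀ * Q).mulVec y)) =
      fun y => ρ t y • (A + (θ / 2) • (S t * (Cᵀ * C)) + σ * σᵀ * Q) *ᵥ y := by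
    funext y
    rw [Matrix.add_mulVec, Matrix.add_mulVec, Matrix.smul_mulVec]
  have htime := (hasDerivAt_gaussian_covariance hpd (hS t ht)
    ((2 * Real.pi) ^ (-(d : ℝ) / 2)) z).deriv
  simp only [← hρ] at htime
  rw [htime, hfield, dvg_gaussian_smul_mulVec hsymm (hρ t), trace_mul_hess_gaussian hsymm (hρ t),
    hric t ht, ← hQdef]
  set w := Q *ᵥ z with hw
  have hz : z = S t *ᵥ w := by rw [hw, Matrix.mulVec_mulVec, hSQ, Matrix.one_mulVec]
  have hS_symm : (S t)ᵀ = S t := by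
    simpa [Matrix.IsHermitian] using hpd.isHermitian
  have htr₁ : (Q * (A * S t)).trace = A.trace := by
    rw [Matrix.trace_mul_comm, Matrix.mul_assoc, hSQ, Matrix.mul_one]
  have htr₂ : (Q * (S t * Aᵀ)).trace = A.trace := by
    rw [← Matrix.mul_assoc, hQS, Matrix.one_mul, Matrix.trace_transpose]
  have htr₃ : (Q * (S t * (Cᵀ * C) * S t)).trace = (S t * (Cᵀ * C)).trace := by
    rw [Matrix.trace_mul_comm, Matrix.mul_assoc, hSQ, Matrix.mul_one]
  have hdot : w ⬝ᵥ (S t * Aᵀ) *ᵥ w = w ⬝ᵥ (A * S t) *ᵥ w := by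
    rw [dotProduct_mulVec, ← Matrix.mulVec_transpose, Matrix.transpose_mul,
      Matrix.transpose_transpose, hS_symm, dotProduct_comm]
  have hdrift : w ⬝ᵥ (A + (θ / 2) • (S t * (Cᵀ * C)) + σ * σᵀ * Q) *ᵥ z =
      w ⬝ᵥ (A * S t) *ᵥ w + θ / 2 * (w ⬝ᵥ (S t * (Cᵀ * C) * S t) *ᵥ w)
        + w ⬝ᵥ (σ * σᵀ) *ᵥ w := by
    rw [hz, Matrix.mulVec_mulVec, Matrix.add_mul, Matrix.add_mul, Matrix.smul_mul,
      Matrix.mul_assoc (σ * σᵀ), hQS, Matrix.mul_one]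
    simp only [Matrix.add_mulVec, Matrix.smul_mulVec, dotProduct_add, dotProduct_smul,
      smul_eq_mul]
  rw [hdrift]
  simp only [Matrix.mul_add, Matrix.mul_sub, Matrix.mul_smul, Matrix.add_mul, Matrix.smul_mul,
    Matrix.trace_add, Matrix.trace_sub, Matrix.trace_smul, Matrix.add_mulVec, Matrix.sub_mulVec,
    Matrix.smul_mulVec, dotProduct_add, dotProduct_sub, dotProduct_smul, smul_eq_mul,
    htr₁, htr₂, htr₃, hdot, Matrix.trace_mul_comm Q (B * R⁻¹ * Bᵀ),
    Matrix.trace_mul_comm Q (σ * σᵀ)]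
  field_simp
  ring
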